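/- Let H := L²(𝕋) (real), where 𝕋 is the one-dimensional torus, regarded as a Banach lattice with the natural (pointwise a.e.) order and identified with its dual. There exists a continuous function k: [0,1]² → ℒ(H) such that k(x, y) is a regular operator (a difference of two positive operators) for every (x, y) ∈ [0,1]², yet the kernel operator T_k: L¹((0,1); H) → L^∞_{σ*}((0,1); H), determined by ⟨(T_k f)(y), v⟩ = ∫₀¹ ⟨k(x, y) f(x), v⟩ dx for a.e. y and all v ∈ H, is not a regular operator. (Such k can be chosen of the form k(x, y) = f(x) where f: [0,1] → ℒ(H) is continuous, takes values in the regular operators, and ‖f(x)‖_r → ∞ as x → 0; this uses that the regular operators are not closed in ℒ(H) and hence there exist regular S_n with ‖S_n‖ → 0 and ‖S_n‖_r → ∞.) -/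

import Mathlib

open MeasureTheory
open scoped ENNReal RealInnerProductSpace

/-- The real Hilbert lattice `H = L²(𝕋)`, where `𝕋` is the one-dimensional torus,
with its natural (pointwise a.e.) order; it is identified with its dual via the inner
product. -/
noncomputable abbrev TorusL2 : Type :=
  Lp (α := AddCircle (1:ℝ)) ℝ 2 volume

/-- Lebesgue measure on `(0,1)`. -/
noncomputable abbrev iooMeasure : Measure ℝ := volume.restrict (Set.Ioo (0:ℝ) 1)

/-- A positive operator on the Banach lattice `H`. -/
def IsPositiveOperator (A : TorusL2 →L[ℝ] TorusL2) : Prop :=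
  ∀ g : TorusL2, 0 ≤ g → 0 ≤ A g

/-- Weak*-measurability of an `H`-valued function (under the self-duality of `H`). -/
def WeakStarMeasurableH (g : ℝ → TorusL2) : Prop :=
  ∀ v : TorusL2, Measurable fun y => ⟪g y, v⟫

/-- The σ*-norm of an `H`-valued function on `((0,1), dx)`, `H` identified with its
dual: `‖g‖_{σ*} = sup_{‖v‖ ≤ 1} esssup_y |⟪g y, v⟫|`. -/
noncomputable def sigmaStarNormH (g : ℝ → TorusL2) : ℝ≥0∞ :=
  ⨆ v : TorusL2, ⨆ _ : ‖v‖ ≤ 1, essSup (fun y => (‖⟪g y, v⟫‖₊ : ℝ≥0∞)) iooMeasure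

/-- `S` is a choice of representatives of a bounded linear operator
`L¹((0,1); H) → L^∞_{σ*}((0,1); H)`. -/
def IsAbstractOperatorRepH (S : Lp TorusL2 1 iooMeasure → ℝ → TorusL2) : Prop :=
  (∀ f, WeakStarMeasurableH (S f) ∧ sigmaStarNormH (S f) < ⊤) ∧
  (∀ f g, sigmaStarNormH (S (f + g) - S f - S g) = 0) ∧
  (∀ (c : ℝ) (f), sigmaStarNormH (S (c • f) - c • S f) = 0) ∧
  (∃ C : ℝ≥0∞, ∀ f, sigmaStarNormH (S f) ≤ C * (‖f‖₊ : ℝ≥0∞))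

/-- Positivity of such an operator representative: `S f ≥ 0` in `L^∞_{σ*}((0,1); H)`
whenever `f ≥ 0` a.e. -/
def AbstractOperatorRepPositiveH (S : Lp TorusL2 1 iooMeasure → ℝ → TorusL2) : Prop :=
  ∀ f : Lp TorusL2 1 iooMeasure, (∀ᵐ x ∂iooMeasure, 0 ≤ f x) →
    ∀ v : TorusL2, 0 ≤ v → ∀ᵐ y ∂iooMeasure, 0 ≤ ⟪S f y, v⟫

/-- Abel–Dini type selection. -/
lemma aux_b (s : ℕ → ℝ) (hs : ∀ j, 0 ≤ s j)
    (hdiv : Filter.Tendsto (fun n : ℕ => ∑ i ∈ Finset.range n, s i) Filter.atTop Filter.atTop) :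
    ∃ b : ℕ → ℝ, (∀ j, 0 < b j ∧ b j ≤ 1) ∧ Filter.Tendsto b Filter.atTop (nhds 0) ∧
      Filter.Tendsto (fun n : ℕ => ∑ i ∈ Finset.range n, s i * (b i)^2)
        Filter.atTop Filter.atTop := by
  set σ : ℕ → ℝ := fun n => 1 + ∑ i ∈ Finset.range n, s i with hσ
  have hσt : Filter.Tendsto σ Filter.atTop Filter.atTop :=
    Filter.tendsto_atTop_add_const_left _ _ hdiv
  have hσ1 : ∀ n, 1 ≤ σ n := fun n => by
    have := Finset.sum_nonneg (s := Finset.range n) (fun i _ => hs i)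
    simp only [hσ]; linarith
  have hσm : Monotone σ := by
    refine monotone_nat_of_le_succ fun n => ?_
    simp only [hσ, Finset.sum_range_succ]; linarith [hs n]
  have hsq : Filter.Tendsto (fun n => √(σ n)) Filter.atTop Filter.atTop :=
    Real.tendsto_sqrt_atTop.comp hσt
  have hsq2 : Filter.Tendsto (fun n => √(√(σ n))) Filter.atTop Filter.atTop :=
    Real.tendsto_sqrt_atTop.comp hsq
  have h1 : ∀ n, 1 ≤ √(σ n) := fun n => Real.one_le_sqrt.2 (hσ1 n)
  have h2 : ∀ n, 1 ≤ √(√(σ n)) := fun n => Real.one_le_sqrt.2 (h1 n)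
  refine ⟨fun n => (√(√(σ n)))⁻¹, fun j => ⟨?_, inv_le_one_of_one_le₀ (h2 j)⟩,
    hsq2.inv_tendsto_atTop, ?_⟩
  · have := h2 j; positivity
  · have key : ∀ n, √(σ n) - 1 ≤ ∑ i ∈ Finset.range n, s i * ((√(√(σ i)))⁻¹)^2 := by
      intro n
      have e : ∀ i, ((√(√(σ i)))⁻¹)^2 = (√(σ i))⁻¹ := fun i => by
        rw [inv_pow, Real.sq_sqrt (by positivity)]
      simp only [e]
      have : (∑ i ∈ Finset.range n, s i) * (√(σ n))⁻¹ ≤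
          ∑ i ∈ Finset.range n, s i * (√(σ i))⁻¹ := by
        rw [Finset.sum_mul]
        refine Finset.sum_le_sum fun i hi => mul_le_mul_of_nonneg_left ?_ (hs i)
        have := h1 i
        refine inv_anti₀ (by linarith) (Real.sqrt_le_sqrt (hσm (Finset.mem_range.1 hi).le))
      refine le_trans ?_ this
      have e2 : (∑ i ∈ Finset.range n, s i) = √(σ n) * √(σ n) - 1 := by
        rw [Real.mul_self_sqrt (by linarith [hσ1 n])]; simp [hσ]
      rw [e2, ← div_eq_mul_inv, le_div_iff₀ (by linarith [h1 n])]
      nlinarith [h1 n]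
    exact Filter.tendsto_atTop_mono key (Filter.tendsto_atTop_add_const_right _ (-1) hsq)

/-- Cosines on the circle. -/
noncomputable def circCos (n : ℤ) (z : AddCircle (1:ℝ)) : ℝ := (fourier n z : ℂ).re

lemma circCos_cont (n : ℤ) : Continuous (circCos n) :=
  Complex.continuous_re.comp (fourier n).continuous

lemma circCos_abs (n : ℤ) (z) : |circCos n z| ≤ 1 := by
  refine (Complex.abs_re_le_norm _).trans ?_
  rw [fourier_apply, Circle.norm_coe]

lemma circCos_mul (m n : ℤ) (z) :
    circCos m z * circCos n z = (circCos (m + n) z + circCos (m - n) z) / 2 := by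
  simp only [circCos, sub_eq_add_neg, fourier_add, fourier_neg, Complex.mul_re, Complex.conj_re,
    Complex.conj_im]
  ring

lemma circCos_coe (n : ℤ) (x : ℝ) : circCos n (x : AddCircle (1:ℝ)) = Real.cos (2 * Real.pi * n * x) := by
  have : (2 * Real.pi * Complex.I * n * x / (1:ℝ) : ℂ) = ((2 * Real.pi * n * x : ℝ) : ℂ) * Complex.I := by
    push_cast; ring
  rw [circCos, fourier_coe_apply, this, Complex.exp_ofReal_mul_I_re]

lemma circCos_integral (n : ℤ) (hn : n ≠ 0) : ∫ z, circCos n z = 0 := by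
  rw [← AddCircle.intervalIntegral_preimage 1 0]
  simp only [circCos_coe]
  have h : (2 * Real.pi * n : ℝ) ≠ 0 := by
    have : (n:ℝ) ≠ 0 := by exact_mod_cast hn
    positivity
  rw [intervalIntegral.integral_comp_mul_left (fun x => Real.cos x) h, integral_cos]
  have h2 : Real.sin (2 * Real.pi * n) = 0 := by
    have h3 := Real.sin_int_mul_pi (2 * n)
    rw [show (2 * Real.pi * n : ℝ) = ((2 * n : ℤ) : ℝ) * Real.pi by push_cast; ring]
    exact h3
  simp [h2]

lemma circCos_zero (z) : circCos 0 z = 1 := by simp [circCos]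

lemma circCos_int (n : ℤ) : Integrable (circCos n) (volume : Measure (AddCircle (1:ℝ))) :=
  (circCos_cont n).integrable_of_hasCompactSupport (HasCompactSupport.of_compactSpace _)

lemma circCos_orth (m n : ℕ) :
    ∫ z, circCos (m + 1) z * circCos (n + 1) z = if m = n then 1 / 2 else 0 := by
  simp only [circCos_mul]
  rw [integral_div, integral_add (circCos_int _) (circCos_int _),
    circCos_integral _ (by positivity)]
  split_ifs with h
  · subst h; simp [circCos_zero, Measure.real]
  · rw [circCos_integral _ (by omega)]; simp

lemma wMem (n : ℕ) : MemLp (fun z => √2 * circCos (n + 1) z) 2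
    (volume : Measure (AddCircle (1:ℝ))) := by
  refine MemLp.of_bound ((circCos_cont _).measurable.const_mul _).aestronglyMeasurable (√2)
    (Filter.Eventually.of_forall fun z => ?_)
  rw [norm_mul, Real.norm_of_nonneg (Real.sqrt_nonneg _)]
  exact mul_le_of_le_one_right (Real.sqrt_nonneg _) (circCos_abs _ z)

noncomputable def wvec (n : ℕ) : TorusL2 := (wMem n).toLp _

lemma wvec_orth : Orthonormal ℝ wvec := by
  rw [orthonormal_iff_ite]
  intro i j
  have : ⟪wvec i, wvec j⟫ = ∫ z, 2 * (circCos (i + 1) z * circCos (j + 1) z) := by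
    rw [L2.inner_def]
    refine integral_congr_ae ?_
    filter_upwards [(wMem i).coeFn_toLp, (wMem j).coeFn_toLp] with z hi hj
    simp only [wvec, hi, hj]
    simp only [RCLike.inner_apply, conj_trivial]
    have := Real.mul_self_sqrt (show (0:ℝ) ≤ 2 by norm_num)
    linear_combination (circCos (i + 1) z * circCos (j + 1) z) * this
  rw [this, integral_const_mul, circCos_orth]
  split_ifs <;> norm_num

/-- The constant function one. -/
noncomputable def onevec : TorusL2 :=
  indicatorConstLp 2 MeasurableSet.univ (measure_ne_top _ _) (1:ℝ)

lemma onevec_norm : ‖onevec‖ ≤ 1 := by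
  refine norm_indicatorConstLp_le.trans ?_
  simp [Measure.real]

lemma onevec_nonneg : 0 ≤ onevec := by
  rw [← Lp.coeFn_nonneg]
  filter_upwards [indicatorConstLp_coeFn (p := 2) (μ := (volume : Measure (AddCircle (1:ℝ))))
    (hs := MeasurableSet.univ) (hμs := measure_ne_top _ _) (c := (1:ℝ))] with z hz
  rw [onevec, hz]; simp

lemma sqrt_two_le : √2 ≤ 2 := by
  rw [Real.sqrt_le_left] <;> norm_num

lemma wvec_le (n : ℕ) : 0 ≤ (2:ℝ) • onevec - wvec n := by
  rw [← Lp.coeFn_nonneg]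
  filter_upwards [indicatorConstLp_coeFn (p := 2) (μ := (volume : Measure (AddCircle (1:ℝ))))
    (hs := MeasurableSet.univ) (hμs := measure_ne_top _ _) (c := (1:ℝ)),
    Lp.coeFn_sub ((2:ℝ) • onevec) (wvec n), Lp.coeFn_smul (2:ℝ) onevec, (wMem n).coeFn_toLp]
    with z hz h1 h2 h3
  rw [h1]
  simp only [Pi.sub_apply, h2, Pi.smul_apply]
  rw [wvec, h3, onevec, hz]
  have := abs_le.1 (circCos_abs (n+1) z)
  simp
  nlinarith [sqrt_two_le, Real.sqrt_nonneg 2]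

lemma wvec_ge (n : ℕ) : 0 ≤ (2:ℝ) • onevec + wvec n := by
  rw [← Lp.coeFn_nonneg]
  filter_upwards [indicatorConstLp_coeFn (p := 2) (μ := (volume : Measure (AddCircle (1:ℝ))))
    (hs := MeasurableSet.univ) (hμs := measure_ne_top _ _) (c := (1:ℝ)),
    Lp.coeFn_add ((2:ℝ) • onevec) (wvec n), Lp.coeFn_smul (2:ℝ) onevec, (wMem n).coeFn_toLp]
    with z hz h1 h2 h3
  rw [h1]
  simp only [Pi.add_apply, h2, Pi.smul_apply]
  rw [wvec, h3, onevec, hz]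
  have := abs_le.1 (circCos_abs (n+1) z)
  simp
  nlinarith [sqrt_two_le, Real.sqrt_nonneg 2]

/-- Coordinate in `(0,1]`. -/
noncomputable def coo (z : AddCircle (1:ℝ)) : ℝ := (AddCircle.measurableEquivIoc 1 0 z : ℝ)

lemma coo_meas : Measurable coo :=
  measurable_subtype_coe.comp (AddCircle.measurableEquivIoc 1 0).measurable

lemma coo_vol (a b : ℝ) (ha : 0 ≤ a) (hab : a ≤ b) (hb : b ≤ 1) :
    (volume : Measure (AddCircle (1:ℝ))).real (coo ⁻¹' Set.Ioc a b) = b - a := by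
  have h : MeasurePreserving coo volume (volume.restrict (Set.Ioc (0:ℝ) (0+1))) := by
    have h1 := AddCircle.measurePreserving_equivIoc (T := 1) (a := 0)
    have h2 := measurePreserving_subtype_coe (μa := (volume : Measure ℝ))
      (measurableSet_Ioc (a := (0:ℝ)) (b := 0+1))
    exact h2.comp h1
  rw [Measure.real, h.measure_preimage measurableSet_Ioc.nullMeasurableSet,
    Measure.restrict_apply measurableSet_Ioc, Set.inter_eq_left.2, Real.volume_Ioc,
    ENNReal.toReal_ofReal (by linarith)]
  intro x hx
  exact ⟨by linarith [hx.1], by linarith [hx.2]⟩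

noncomputable def Dvec (a b : ℝ) : TorusL2 :=
  indicatorConstLp 2 (coo_meas (measurableSet_Ioc (a := a) (b := b))) (measure_ne_top _ _) (1:ℝ)

lemma Dvec_nonneg (a b : ℝ) : 0 ≤ Dvec a b := by
  rw [← Lp.coeFn_nonneg]
  filter_upwards [indicatorConstLp_coeFn (p := 2) (μ := (volume : Measure (AddCircle (1:ℝ))))
    (hs := coo_meas (measurableSet_Ioc (a := a) (b := b)))
    (hμs := measure_ne_top _ _) (c := (1:ℝ))] with z hz
  rw [Dvec, hz]
  exact Set.indicator_nonneg (fun _ _ => zero_le_one) _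

lemma Dvec_add (a b c : ℝ) (hab : a ≤ b) (hbc : b ≤ c) : Dvec a c = Dvec a b + Dvec b c := by
  have hd : Disjoint (coo ⁻¹' Set.Ioc a b) (coo ⁻¹' Set.Ioc b c) :=
    Disjoint.preimage _ (Set.Ioc_disjoint_Ioc_of_le le_rfl)
  unfold Dvec
  rw [← indicatorConstLp_disjoint_union _ _ _ _ hd]
  congr 1
  rw [← Set.preimage_union, Set.Ioc_union_Ioc_eq_Ioc hab hbc]

noncomputable def pt (j : ℕ) : ℝ := 1 / ((j:ℝ) + 1)

lemma pt_anti : StrictAnti pt := by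
  intro i j h
  unfold pt
  have : (i:ℝ) < j := by exact_mod_cast h
  gcongr

lemma pt_pos (j : ℕ) : 0 < pt j := by unfold pt; positivity

lemma pt_le (j : ℕ) : pt j ≤ 1 := by
  have := pt_anti.antitone (Nat.zero_le j); simpa [pt] using this

noncomputable def uvec (j : ℕ) : TorusL2 := Dvec (pt (j+1)) (pt j)

noncomputable def sval (j : ℕ) : ℝ := √(pt j - pt (j+1))

lemma sval_pos (j : ℕ) : 0 < sval j :=
  Real.sqrt_pos.2 (sub_pos.2 (pt_anti (Nat.lt_succ_self j)))

lemma uvec_inner (i j : ℕ) : ⟪uvec i, uvec j⟫ = if i = j then sval j ^ 2 else 0 := by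
  unfold uvec Dvec
  rw [L2.real_inner_indicatorConstLp_one_indicatorConstLp_one]
  split_ifs with h
  · subst h
    rw [Set.inter_self, coo_vol _ _ (pt_pos _).le (pt_anti (Nat.lt_succ_self i)).le (pt_le _),
      sval, Real.sq_sqrt]
    exact (sub_pos.2 (pt_anti (Nat.lt_succ_self i))).le
  · rw [← Set.preimage_inter, Set.Ioc_inter_Ioc, Set.Ioc_eq_empty]; · simp
    rw [not_lt]
    rcases lt_or_gt_of_ne h with h | h
    · exact (min_le_right _ _).trans (le_trans (pt_anti.antitone h) (le_max_left _ _))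
    · exact (min_le_left _ _).trans (le_trans (pt_anti.antitone h) (le_max_right _ _))

noncomputable def evec (j : ℕ) : TorusL2 := (sval j)⁻¹ • uvec j

lemma evec_inner_u (i j : ℕ) : ⟪evec i, uvec j⟫ = if i = j then sval j else 0 := by
  rw [evec, real_inner_smul_left, uvec_inner]
  split_ifs with h
  · subst h
    have := (sval_pos i).ne'
    field_simp
  · simp

lemma evec_orth : Orthonormal ℝ evec := by
  rw [orthonormal_iff_ite]
  intro i j
  conv_lhs => rw [show evec j = (sval j)⁻¹ • uvec j from rfl]
  rw [real_inner_smul_right, evec_inner_u]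
  split_ifs with h
  · exact inv_mul_cancel₀ (sval_pos j).ne'
  · simp

lemma smul_nonnegH (c : ℝ) (hc : 0 ≤ c) (g : TorusL2) (hg : 0 ≤ g) : 0 ≤ c • g := by
  rw [← Lp.coeFn_nonneg] at hg ⊢
  filter_upwards [hg, Lp.coeFn_smul c g] with z h1 h2
  rw [h2]
  exact mul_nonneg hc h1

lemma inner_nonnegH (f g : TorusL2) (hf : 0 ≤ f) (hg : 0 ≤ g) : 0 ≤ ⟪f, g⟫ := by
  rw [L2.inner_def]
  rw [← Lp.coeFn_nonneg] at hf hg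
  refine integral_nonneg_of_ae ?_
  filter_upwards [hf, hg] with z h1 h2
  simp only [RCLike.inner_apply, conj_trivial]
  exact mul_nonneg h2 h1

lemma evec_nonneg (j : ℕ) : 0 ≤ evec j :=
  smul_nonnegH _ (inv_nonneg.2 (sval_pos j).le) _ (Dvec_nonneg _ _)

lemma sval_div : Filter.Tendsto (fun n : ℕ => ∑ i ∈ Finset.range n, sval i)
    Filter.atTop Filter.atTop := by
  rw [← not_summable_iff_tendsto_nat_atTop_of_nonneg (fun n => (sval_pos n).le)]
  intro h
  have h2 : Summable (fun n : ℕ => 1 / ((n + 2 : ℕ):ℝ)) := by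
    refine Summable.of_nonneg_of_le (fun n => by positivity) (fun n => ?_) h
    refine Real.le_sqrt_of_sq_le ?_
    unfold pt
    push_cast
    rw [div_sub_div _ _ (by positivity) (by positivity), div_pow,
      div_le_div_iff₀ (by positivity) (by positivity)]
    ring_nf
    nlinarith [(Nat.cast_nonneg n : (0:ℝ) ≤ n), sq_nonneg (n:ℝ)]
  exact Real.not_summable_one_div_natCast ((summable_nat_add_iff 2).1 h2)

noncomputable def rk (j : ℕ) : TorusL2 →L[ℝ] TorusL2 :=
  (innerSL ℝ (evec j)).smulRight (wvec j)

lemma rk_apply (j : ℕ) (g : TorusL2) : rk j g = ⟪evec j, g⟫ • wvec j := rfl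

lemma sum_norm (N : ℕ) (a : ℕ → ℝ) (M : ℝ) (hM : 0 ≤ M) (ha : ∀ j, |a j| ≤ M) :
    ‖∑ j ∈ Finset.range N, a j • rk j‖ ≤ M := by
  refine ContinuousLinearMap.opNorm_le_bound _ hM fun g => ?_
  have e : (∑ j ∈ Finset.range N, a j • rk j) g =
      ∑ j ∈ Finset.range N, (a j * ⟪evec j, g⟫) • wvec j := by
    simp [ContinuousLinearMap.sum_apply, rk_apply, smul_smul]
  rw [e]
  refine abs_le_of_sq_le_sq' ?_ (by positivity) |>.2
  rw [← real_inner_self_eq_norm_sq, wvec_orth.inner_sum]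
  have hb := evec_orth.sum_inner_products_le g (s := Finset.range N)
  calc ∑ i ∈ Finset.range N, (starRingEnd ℝ) (a i * ⟪evec i, g⟫) * (a i * ⟪evec i, g⟫)
      ≤ ∑ i ∈ Finset.range N, M ^ 2 * ‖⟪evec i, g⟫‖ ^ 2 := by
        refine Finset.sum_le_sum fun i _ => ?_
        have h1 : a i ^ 2 ≤ M ^ 2 := sq_le_sq' (by linarith [abs_le.1 (ha i)]) (abs_le.1 (ha i)).2
        rw [Real.norm_eq_abs, sq_abs]
        simp only [conj_trivial]
        nlinarith [mul_le_mul_of_nonneg_right h1 (sq_nonneg ⟪evec i, g⟫)]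
    _ ≤ (M * ‖g‖) ^ 2 := by
        rw [← Finset.mul_sum, mul_pow]
        exact mul_le_mul_of_nonneg_left hb (sq_nonneg M)

/-- Tent coefficients. -/
noncomputable def tent (b x : ℝ) : ℝ := max 0 (min x (b - x))

lemma tent_nonneg (b x : ℝ) : 0 ≤ tent b x := le_max_left _ _

lemma tent_lip (b x y : ℝ) : |tent b x - tent b y| ≤ |x - y| := by
  unfold tent
  refine (abs_max_sub_max_le_max _ _ _ _).trans ?_
  simp only [sub_self, abs_zero]
  refine max_le (abs_nonneg _) ((abs_min_sub_min_le_max _ _ _ _).trans ?_)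
  refine max_le le_rfl ?_
  rw [show b - x - (b - y) = -(x - y) by ring, abs_neg]

lemma tent_cont (b : ℝ) : Continuous (tent b) := by unfold tent; fun_prop

lemma tent_integral (b : ℝ) (hb : 0 < b) (hb1 : b ≤ 1) :
    b ^ 2 / 16 ≤ ∫ x, tent b x ∂iooMeasure := by
  have hint : IntegrableOn (tent b) (Set.Ioo 0 1) :=
    ((tent_cont b).continuousOn.integrableOn_compact isCompact_Icc).mono_set Set.Ioo_subset_Icc_self
  have hsub : Set.Ioo (b/4) (b/2) ⊆ Set.Ioo (0:ℝ) 1 := fun x hx =>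
    ⟨by linarith [hx.1], by linarith [hx.2]⟩
  calc b ^ 2 / 16 = ∫ x in Set.Ioo (b/4) (b/2), b / 4 := by
        rw [setIntegral_const, Measure.real, Real.volume_Ioo, ENNReal.toReal_ofReal (by linarith),
          smul_eq_mul]
        ring
    _ ≤ ∫ x in Set.Ioo (b/4) (b/2), tent b x := by
        refine setIntegral_mono_on (by simp) (hint.mono_set hsub) measurableSet_Ioo fun x hx => ?_
        exact le_max_of_le_right (le_min hx.1.le (by linarith [hx.2]))
    _ ≤ ∫ x in Set.Ioo (0:ℝ) 1, tent b x :=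
        setIntegral_mono_set hint (Filter.Eventually.of_forall fun x => tent_nonneg b x)
          hsub.eventuallyLE

lemma tent_zero (b : ℕ → ℝ) (hb : Filter.Tendsto b Filter.atTop (nhds 0)) (x : ℝ) (hx : 0 ≤ x) :
    ∃ N : ℕ, ∀ j, N ≤ j → tent (b j) x = 0 := by
  rcases hx.eq_or_lt with rfl | hx
  · exact ⟨0, fun j _ => max_eq_left (min_le_left _ _)⟩
  · obtain ⟨N, hN⟩ := Filter.eventually_atTop.1 (hb.eventually (gt_mem_nhds hx))
    exact ⟨N, fun j hj => max_eq_left ((min_le_right _ _).trans (by linarith [hN j hj]))⟩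

noncomputable def ker (b : ℕ → ℝ) (x : ℝ) : TorusL2 →L[ℝ] TorusL2 := ∑' j, tent (b j) x • rk j

lemma ker_eq (b : ℕ → ℝ) (x : ℝ) (N : ℕ) (hN : ∀ j, N ≤ j → tent (b j) x = 0) :
    ker b x = ∑ j ∈ Finset.range N, tent (b j) x • rk j := by
  refine tsum_eq_sum fun j hj => ?_
  rw [hN j (by simpa using hj), zero_smul]

lemma ker_lip (b : ℕ → ℝ) (hb : Filter.Tendsto b Filter.atTop (nhds 0)) (x y : ℝ) (hx : 0 ≤ x)
    (hy : 0 ≤ y) : ‖ker b x - ker b y‖ ≤ |x - y| := by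
  obtain ⟨N, hN⟩ := tent_zero b hb x hx
  obtain ⟨M, hM⟩ := tent_zero b hb y hy
  rw [ker_eq b x (max N M) fun j hj => hN j ((le_max_left _ _).trans hj),
    ker_eq b y (max N M) fun j hj => hM j ((le_max_right _ _).trans hj),
    ← Finset.sum_sub_distrib]
  simp only [← sub_smul]
  exact sum_norm _ (fun j => tent (b j) x - tent (b j) y) _ (abs_nonneg _)
    fun j => tent_lip _ _ _

lemma ker_cont (b : ℕ → ℝ) (hb : Filter.Tendsto b Filter.atTop (nhds 0)) :
    ContinuousOn (ker b) (Set.Icc 0 1) := by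
  refine LipschitzOnWith.continuousOn (K := 1) ?_
  refine LipschitzOnWith.of_dist_le_mul fun x hx y hy => ?_
  rw [dist_eq_norm, Real.dist_eq, NNReal.coe_one, one_mul]
  exact ker_lip b hb x y hx.1 hy.1

lemma sum_nonnegH (N : ℕ) (g : ℕ → TorusL2) (hg : ∀ j, 0 ≤ g j) :
    0 ≤ ∑ j ∈ Finset.range N, g j := Finset.sum_nonneg fun j _ => hg j

lemma ker_reg (b : ℕ → ℝ) (hb : Filter.Tendsto b Filter.atTop (nhds 0)) (x : ℝ) (hx : 0 ≤ x) :
    ∃ P Q : TorusL2 →L[ℝ] TorusL2,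
          IsPositiveOperator P ∧ IsPositiveOperator Q ∧ ker b x = P - Q := by
  obtain ⟨N, hN⟩ := tent_zero b hb x hx
  refine ⟨∑ j ∈ Finset.range N, tent (b j) x •
      (innerSL ℝ (evec j)).smulRight ((2:ℝ) • onevec + wvec j),
    ∑ j ∈ Finset.range N, tent (b j) x • (innerSL ℝ (evec j)).smulRight ((2:ℝ) • onevec),
    ?_, ?_, ?_⟩
  · intro g hg
    rw [ContinuousLinearMap.sum_apply]
    refine sum_nonnegH N _ fun j => smul_nonnegH _ (tent_nonneg _ _) _ ?_
    exact smul_nonnegH _ (inner_nonnegH _ _ (evec_nonneg j) hg) _ (wvec_ge j)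
  · intro g hg
    rw [ContinuousLinearMap.sum_apply]
    refine sum_nonnegH N _ fun j => smul_nonnegH _ (tent_nonneg _ _) _ ?_
    exact smul_nonnegH _ (inner_nonnegH _ _ (evec_nonneg j) hg) _
      (smul_nonnegH _ (by norm_num) _ onevec_nonneg)
  · rw [ker_eq b x N hN, ← Finset.sum_sub_distrib]
    refine Finset.sum_congr rfl fun j _ => ?_
    rw [← smul_sub]
    congr 1
    ext1 g
    simp [rk_apply, smul_add]

lemma ker_u (b : ℕ → ℝ) (hb : Filter.Tendsto b Filter.atTop (nhds 0)) (x : ℝ) (hx : 0 ≤ x)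
    (j : ℕ) : ⟪ker b x (uvec j), wvec j⟫ = sval j * tent (b j) x := by
  obtain ⟨N, hN⟩ := tent_zero b hb x hx
  rw [ker_eq b x (max N (j+1)) fun i hi => hN i ((le_max_left _ _).trans hi),
    ContinuousLinearMap.sum_apply, sum_inner]
  rw [Finset.sum_eq_single j]
  · rw [ContinuousLinearMap.smul_apply, rk_apply, evec_inner_u, if_pos rfl, real_inner_smul_left,
      real_inner_smul_left, real_inner_self_eq_norm_sq, wvec_orth.1 j]
    ring
  · intro i _ hij
    rw [ContinuousLinearMap.smul_apply, rk_apply, evec_inner_u, if_neg hij]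
    simp
  · intro h
    exact absurd (Finset.mem_range.2 ((Nat.lt_succ_self j).trans_le (le_max_right _ _))) h

/-- Constant functions in `L¹`. -/
noncomputable def cst (u : TorusL2) : Lp TorusL2 1 iooMeasure := (memLp_const u).toLp _

lemma cst_coe (u : TorusL2) : ∀ᵐ x ∂iooMeasure, cst u x = u := (memLp_const u).coeFn_toLp

lemma cst_add (u v : TorusL2) : cst (u + v) = cst u + cst v := rfl

lemma rep_add (S : Lp TorusL2 1 iooMeasure → ℝ → TorusL2) (hS : IsAbstractOperatorRepH S)
    (f g : Lp TorusL2 1 iooMeasure) (v : TorusL2) (hv : ‖v‖ ≤ 1) :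
    ∀ᵐ y ∂iooMeasure, ⟪S (f + g) y, v⟫ = ⟪S f y, v⟫ + ⟪S g y, v⟫ := by
  have h := hS.2.1 f g
  have h2 : essSup (fun y => (‖⟪(S (f + g) - S f - S g) y, v⟫‖₊ : ℝ≥0∞)) iooMeasure = 0 := by
    refine le_antisymm ?_ (zero_le)
    rw [← h]
    exact le_iSup₂_of_le v hv le_rfl
  rw [ENNReal.essSup_eq_zero_iff] at h2
  filter_upwards [h2] with y hy
  simp only [Pi.zero_apply, ENNReal.coe_eq_zero, nnnorm_eq_zero, Pi.sub_apply, inner_sub_left] at hy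
  linarith

lemma rep_sum (S : Lp TorusL2 1 iooMeasure → ℝ → TorusL2) (hS : IsAbstractOperatorRepH S) (J : ℕ) :
    ∀ᵐ y ∂iooMeasure, ⟪S (cst (Dvec 0 (pt 0))) y, onevec⟫ =
      ⟪S (cst (Dvec 0 (pt J))) y, onevec⟫ +
        ∑ j ∈ Finset.range J, ⟪S (cst (uvec j)) y, onevec⟫ := by
  induction J with
  | zero => simp
  | succ J ih =>
    have e : cst (Dvec 0 (pt J)) = cst (Dvec 0 (pt (J+1))) + cst (uvec J) := by
      rw [← cst_add, uvec, ← Dvec_add _ _ _ (pt_pos _).le (pt_anti (Nat.lt_succ_self J)).le]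
    have h := rep_add S hS (cst (Dvec 0 (pt (J+1)))) (cst (uvec J)) onevec onevec_norm
    rw [← e] at h
    filter_upwards [ih, h] with y h1 h2
    rw [h1, h2, Finset.sum_range_succ]; ring

lemma rep_le (S : Lp TorusL2 1 iooMeasure → ℝ → TorusL2) (hS : IsAbstractOperatorRepH S)
    (hP : AbstractOperatorRepPositiveH S) (J : ℕ) :
    ∀ᵐ y ∂iooMeasure, ∑ j ∈ Finset.range J, |⟪S (cst (uvec j)) y, wvec j⟫| ≤
      2 * ⟪S (cst (Dvec 0 (pt 0))) y, onevec⟫ := by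
  have hc : ∀ u : TorusL2, 0 ≤ u → ∀ᵐ x ∂iooMeasure, 0 ≤ cst u x := fun u hu => by
    filter_upwards [cst_coe u] with x hx
    rw [hx]; exact hu
  have h1 := hP _ (hc _ (Dvec_nonneg 0 (pt J))) _ onevec_nonneg
  have h2 : ∀ᵐ y ∂iooMeasure, ∀ j, 0 ≤ ⟪S (cst (uvec j)) y, (2:ℝ) • onevec - wvec j⟫ :=
    ae_all_iff.2 fun j => hP _ (hc _ (Dvec_nonneg _ _)) _ (wvec_le j)
  have h3 : ∀ᵐ y ∂iooMeasure, ∀ j, 0 ≤ ⟪S (cst (uvec j)) y, (2:ℝ) • onevec + wvec j⟫ :=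
    ae_all_iff.2 fun j => hP _ (hc _ (Dvec_nonneg _ _)) _ (wvec_ge j)
  filter_upwards [h1, h2, h3, rep_sum S hS J] with y h1 h2 h3 h4
  have : ∑ j ∈ Finset.range J, |⟪S (cst (uvec j)) y, wvec j⟫| ≤
      ∑ j ∈ Finset.range J, 2 * ⟪S (cst (uvec j)) y, onevec⟫ := by
    refine Finset.sum_le_sum fun j _ => abs_le.2 ?_
    have a := h2 j
    have c := h3 j
    rw [inner_sub_right, real_inner_smul_right] at a
    rw [inner_add_right, real_inner_smul_right] at c
    constructor <;> linarith
  rw [← Finset.mul_sum] at this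
  linarith

/-- **A continuous, pointwise regular kernel whose kernel operator is not regular.**
With `H = L²(𝕋)`, there is a continuous `k : [0,1]² → ℒ(H)` whose values are regular
operators (differences of positive operators on `H`), while the associated kernel
operator `T_k : L¹((0,1); H) → L^∞_{σ*}((0,1); H)`, determined by
`⟪(T_k f)(y), v⟫ = ∫₀¹ ⟪k(x,y) f(x), v⟫ dx` for a.e. `y`, is not a difference of two
positive bounded operators. -/
theorem statement18 :
    ∃ k : ℝ × ℝ → TorusL2 →L[ℝ] TorusL2,
      ContinuousOn k (Set.Icc (0:ℝ) 1 ×ˢ Set.Icc (0:ℝ) 1) ∧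
      (∀ q ∈ Set.Icc (0:ℝ) 1 ×ˢ Set.Icc (0:ℝ) 1,
        ∃ P Q : TorusL2 →L[ℝ] TorusL2,
          IsPositiveOperator P ∧ IsPositiveOperator Q ∧ k q = P - Q) ∧
      ¬ (∃ S₁ S₂ : Lp TorusL2 1 iooMeasure → ℝ → TorusL2,
          IsAbstractOperatorRepH S₁ ∧ IsAbstractOperatorRepH S₂ ∧
          AbstractOperatorRepPositiveH S₁ ∧ AbstractOperatorRepPositiveH S₂ ∧
          ∀ (f : Lp TorusL2 1 iooMeasure) (v : TorusL2),
            (fun y => ∫ x, ⟪k (x, y) (f x), v⟫ ∂iooMeasure)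
              =ᵐ[iooMeasure] fun y => ⟪S₁ f y, v⟫ - ⟪S₂ f y, v⟫) := by
  obtain ⟨b, hb1, hb0, hbd⟩ := aux_b sval (fun j => (sval_pos j).le) sval_div
  refine ⟨fun q => ker b q.1, ?_, ?_, ?_⟩
  · exact (ker_cont b hb0).comp continuousOn_fst fun q hq => hq.1
  · exact fun q hq => ker_reg b hb0 q.1 hq.1.1
  · rintro ⟨S₁, S₂, hS₁, hS₂, hP₁, hP₂, hk⟩
    have e1 : ∀ᵐ y ∂iooMeasure, ∀ J : ℕ, _ := ae_all_iff.2 fun J => rep_le S₁ hS₁ hP₁ J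
    have e2 : ∀ᵐ y ∂iooMeasure, ∀ J : ℕ, _ := ae_all_iff.2 fun J => rep_le S₂ hS₂ hP₂ J
    have e3 : ∀ᵐ y ∂iooMeasure, ∀ j : ℕ, _ := ae_all_iff.2 fun j => hk (cst (uvec j)) (wvec j)
    have hval : ∀ j, sval j * (b j ^ 2) / 16 ≤
        ∫ x, ⟪ker b x (cst (uvec j) x), wvec j⟫ ∂iooMeasure := by
      intro j
      have : ∫ x, ⟪ker b x (cst (uvec j) x), wvec j⟫ ∂iooMeasure =
          ∫ x, sval j * tent (b j) x ∂iooMeasure := by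
        refine integral_congr_ae ?_
        filter_upwards [cst_coe (uvec j), ae_restrict_mem measurableSet_Ioo] with x hx hx2
        rw [hx, ker_u b hb0 x hx2.1.le]
      rw [this, integral_const_mul]
      have := mul_le_mul_of_nonneg_left (tent_integral (b j) (hb1 j).1 (hb1 j).2) (sval_pos j).le
      linarith
    have hne : (ae iooMeasure).NeBot := by
      rw [ae_neBot, Ne, Measure.restrict_eq_zero, Real.volume_Ioo]
      simp
    obtain ⟨y, h1, h2, h3⟩ := (e1.and (e2.and e3)).exists
    set M := 2 * ⟪S₁ (cst (Dvec 0 (pt 0))) y, onevec⟫ + 2 * ⟪S₂ (cst (Dvec 0 (pt 0))) y, onevec⟫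
      with hM
    obtain ⟨J, hJ⟩ := (hbd.eventually (Filter.eventually_gt_atTop (16 * M))).exists
    have : ∑ j ∈ Finset.range J, sval j * (b j ^ 2) ≤ ∑ j ∈ Finset.range J,
        16 * (|⟪S₁ (cst (uvec j)) y, wvec j⟫| + |⟪S₂ (cst (uvec j)) y, wvec j⟫|) := by
      refine Finset.sum_le_sum fun j _ => ?_
      have a := hval j
      have c := h3 j
      simp only at c
      rw [c] at a
      linarith [le_abs_self ⟪S₁ (cst (uvec j)) y, wvec j⟫,
        neg_abs_le ⟪S₂ (cst (uvec j)) y, wvec j⟫]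
    rw [← Finset.mul_sum, Finset.sum_add_distrib] at this
    linarith [h1 J, h2 J]
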